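/- arXiv:1702.00078 — 4 statements merged into one kernel-verified Lean document; each statement's English description precedes it below -/
import Mathlib

section
/- Fix a bipartite Bell scenario with n Alice inputs, m Bob inputs, and binary outputs, and a Bell expression β(p) = Σ c(a,b,x,y)·p(a,b|x,y). Let β^max be the maximum of β over all bipartite no-signaling boxes, let β₁^max be the maximum of β over all bipartite no-signaling boxes for which Bob's observable B₁ (input y = 1) is deterministic (i.e. Bob's marginal distribution at y = 1 is a point mass), and set w = β^max − β₁^max (the relevance of B₁). Then for every tripartite no-signaling box p̃(a,b,g|x,y) in which Grace has a single input and a binary output, β(p̃_AB) + w·⟨B₁ᵍB₁⟩ ≤ β^max, where p̃_AB is the Alice–Bob marginal of p̃ and ⟨B₁ᵍB₁⟩ = Σ_{b,g} b·g·p̃(b,g|y=1) is the correlator between Grace's output and Bob's output at input y = 1 (outputs valued in {−1,+1}). -/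
open Finset

/-- The sign `±1` associated with a binary output. -/
def sgn (b : Bool) : ℝ := if b then 1 else -1

/-- A bipartite no-signaling box with binary outputs. -/
def IsNSBox {n m : ℕ} (p : Bool → Bool → Fin n → Fin m → ℝ) : Prop :=
  (∀ a b x y, 0 ≤ p a b x y) ∧
  (∀ x y, ∑ a, ∑ b, p a b x y = 1) ∧
  (∀ a x y y', ∑ b, p a b x y = ∑ b, p a b x y') ∧
  (∀ b y x x', ∑ a, p a b x y = ∑ a, p a b x' y)

/-- A tripartite no-signaling box in which Grace holds a single fixed input. -/
def IsNS3Box {n m : ℕ} (p : Bool → Bool → Bool → Fin n → Fin m → ℝ) : Prop :=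
  (∀ a b g x y, 0 ≤ p a b g x y) ∧
  (∀ x y, ∑ a, ∑ b, ∑ g, p a b g x y = 1) ∧
  (∀ a g x y y', ∑ b, p a b g x y = ∑ b, p a b g x y') ∧
  (∀ b g y x x', ∑ a, p a b g x y = ∑ a, p a b g x' y)

/-- The Bell value `β(p) = Σ c(a,b,x,y)·p(a,b|x,y)` of a bipartite box. -/
def bell {n m : ℕ} (c : Bool → Bool → Fin n → Fin m → ℝ)
    (p : Bool → Bool → Fin n → Fin m → ℝ) : ℝ :=
  ∑ x, ∑ y, ∑ a, ∑ b, c a b x y * p a b x y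

/-- Bob's observable `B₁` (input `y = 1`, i.e. `0 : Fin m`) is deterministic:
his marginal at that input is a point mass. -/
def DetB1 {n m : ℕ} [NeZero m] (p : Bool → Bool → Fin n → Fin m → ℝ) : Prop :=
  ∃ b0 : Bool, ∀ x b, (∑ a, p a b x 0) = if b = b0 then 1 else 0

/-- The correlator `⟨B₁ᵍ B₁⟩` between Grace's output and Bob's output at Bob's input `y = 1`. -/
def corrBG {n m : ℕ} [NeZero n] [NeZero m]
    (p : Bool → Bool → Bool → Fin n → Fin m → ℝ) : ℝ :=
  ∑ b, ∑ g, sgn b * sgn g * (∑ a, p a b g 0 0)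

def UBox {n m : ℕ} (W : ℝ) (p : Bool → Bool → Fin n → Fin m → ℝ) : Prop :=
  (∀ a b x y, 0 ≤ p a b x y) ∧
  (∀ x y, ∑ a, ∑ b, p a b x y = W) ∧
  (∀ a x y y', ∑ b, p a b x y = ∑ b, p a b x y') ∧
  (∀ b y x x', ∑ a, p a b x y = ∑ a, p a b x' y)

def UDet {n m : ℕ} [NeZero m] (W : ℝ) (p : Bool → Bool → Fin n → Fin m → ℝ) : Prop :=
  ∃ b0 : Bool, ∀ x b, (∑ a, p a b x 0) = if b = b0 then W else 0

lemma bell_smul {n m : ℕ} (c p : Bool → Bool → Fin n → Fin m → ℝ) (k : ℝ) :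
    bell c (fun a b x y => k * p a b x y) = k * bell c p := by
  simp only [bell, Finset.mul_sum]
  refine sum_congr rfl fun x _ => sum_congr rfl fun y _ => sum_congr rfl fun a _ =>
    sum_congr rfl fun b _ => by ring

lemma bell_add {n m : ℕ} (c p q : Bool → Bool → Fin n → Fin m → ℝ) :
    bell c (fun a b x y => p a b x y + q a b x y) = bell c p + bell c q := by
  simp only [bell, mul_add, Finset.sum_add_distrib]

lemma ubox_norm {n m : ℕ} {W : ℝ} (hW : 0 < W) {p : Bool → Bool → Fin n → Fin m → ℝ}
    (h : UBox W p) : IsNSBox (fun a b x y => W⁻¹ * p a b x y) := by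
  obtain ⟨h1, h2, h3, h4⟩ := h
  refine ⟨fun a b x y => mul_nonneg (inv_nonneg.2 hW.le) (h1 a b x y), fun x y => ?_,
    fun a x y y' => ?_, fun b y x x' => ?_⟩
  · simp only [← Finset.mul_sum]
    rw [h2, inv_mul_cancel₀ hW.ne']
  · simp only [← Finset.mul_sum]
    rw [h3 a x y y']
  · simp only [← Finset.mul_sum]
    rw [h4 b y x x']

lemma ubox_nonneg {n m : ℕ} [NeZero n] [NeZero m] {W : ℝ}
    {p : Bool → Bool → Fin n → Fin m → ℝ} (h : UBox W p) : 0 ≤ W := by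
  rw [← h.2.1 0 0]
  exact sum_nonneg fun a _ => sum_nonneg fun b _ => h.1 a b 0 0

lemma ubox_zero {n m : ℕ} {p : Bool → Bool → Fin n → Fin m → ℝ} (h : UBox 0 p)
    (c : Bool → Bool → Fin n → Fin m → ℝ) : bell c p = 0 := by
  have : ∀ a b x y, p a b x y = 0 := by
    intro a b x y
    have h2 := h.2.1 x y
    simp only [Fintype.sum_bool] at h2
    have := h.1 true true x y
    have := h.1 true false x y
    have := h.1 false true x y
    have := h.1 false false x y
    cases a <;> cases b <;> linarith
  simp [bell, this]

lemma ubox_bell {n m : ℕ} [NeZero n] [NeZero m] {c : Bool → Bool → Fin n → Fin m → ℝ} {βmax W : ℝ}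
    (hmax : IsGreatest {v : ℝ | ∃ p, IsNSBox p ∧ v = bell c p} βmax)
    {p : Bool → Bool → Fin n → Fin m → ℝ} (h : UBox W p) : bell c p ≤ W * βmax := by
  rcases (ubox_nonneg h).eq_or_lt with h0 | h0
  · subst h0
    rw [ubox_zero h]; simp
  · have := hmax.2 ⟨_, ubox_norm h0 h, rfl⟩
    rw [bell_smul] at this
    rwa [inv_mul_le_iff₀ h0] at this

lemma ubox_bell_det {n m : ℕ} [NeZero n] [NeZero m] {c : Bool → Bool → Fin n → Fin m → ℝ}
    {β1max W : ℝ}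
    (hmax : IsGreatest {v : ℝ | ∃ p, IsNSBox p ∧ DetB1 p ∧ v = bell c p} β1max)
    {p : Bool → Bool → Fin n → Fin m → ℝ} (h : UBox W p) (hd : UDet W p) :
    bell c p ≤ W * β1max := by
  rcases (ubox_nonneg h).eq_or_lt with h0 | h0
  · subst h0
    rw [ubox_zero h]; simp
  · have hd' : DetB1 (fun a b x y => W⁻¹ * p a b x y) := by
      obtain ⟨b0, hb⟩ := hd
      refine ⟨b0, fun x b => ?_⟩
      rw [← Finset.mul_sum, hb]
      split_ifs
      · exact inv_mul_cancel₀ h0.ne'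
      · simp
    have := hmax.2 ⟨_, ubox_norm h0 h, hd', rfl⟩
    rw [bell_smul] at this
    rwa [inv_mul_le_iff₀ h0] at this

noncomputable def clampf (t δ u : ℝ) : ℝ := max 0 (min t (u - δ))

lemma clamp_cases (t δ u : ℝ) (ht : 0 ≤ t) :
    (u ≤ δ ∧ clampf t δ u = 0) ∨ (δ ≤ u ∧ u ≤ δ + t ∧ clampf t δ u = u - δ) ∨
    (δ + t ≤ u ∧ clampf t δ u = t) := by
  unfold clampf
  rcases le_total u δ with h | h
  · left
    exact ⟨h, max_eq_left (le_trans (min_le_right _ _) (by linarith))⟩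
  · rcases le_total u (δ + t) with h' | h'
    · right; left
      exact ⟨h, h', by rw [min_eq_right (by linarith), max_eq_right (by linarith)]⟩
    · right; right
      exact ⟨h', by rw [min_eq_left (by linarith), max_eq_right ht]⟩

lemma key (W δ t α q s : ℝ) (hδ : 0 ≤ δ) (ht : 0 ≤ t) (hW : W = t + 2 * δ) (hs : 0 ≤ s)
    (hα : s ≤ α) (hq : s ≤ q) (hf : 0 ≤ W - α - q + s) :
    ∃ s', 0 ≤ s' ∧ s' ≤ clampf t δ α ∧ s' ≤ clampf t δ q ∧
      0 ≤ t - clampf t δ α - clampf t δ q + s' ∧ s' ≤ s ∧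
      clampf t δ α - s' ≤ α - s ∧ clampf t δ q - s' ≤ q - s ∧
      t - clampf t δ α - clampf t δ q + s' ≤ W - α - q + s := by
  have h1 := clamp_cases t δ α ht
  have h2 := clamp_cases t δ q ht
  generalize clampf t δ α = A at *
  generalize clampf t δ q = Q at *
  subst hW
  refine ⟨max (max 0 (A + Q - t)) (max (s - α + A) (s - q + Q)), ?_, ?_, ?_, ?_, ?_, ?_, ?_, ?_⟩
  · exact le_max_of_le_left (le_max_left _ _)
  · rcases h1 with ⟨_, h1⟩ | ⟨_, _, h1⟩ | ⟨_, h1⟩ <;> rcases h2 with ⟨_, h2⟩ | ⟨_, _, h2⟩ | ⟨_, h2⟩ <;>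
    refine max_le (max_le ?_ ?_) (max_le ?_ ?_) <;> linarith
  · rcases h1 with ⟨_, h1⟩ | ⟨_, _, h1⟩ | ⟨_, h1⟩ <;> rcases h2 with ⟨_, h2⟩ | ⟨_, _, h2⟩ | ⟨_, h2⟩ <;>
    refine max_le (max_le ?_ ?_) (max_le ?_ ?_) <;> linarith
  · have : A + Q - t ≤ max (max 0 (A + Q - t)) (max (s - α + A) (s - q + Q)) :=
      le_max_of_le_left (le_max_right _ _)
    linarith
  · rcases h1 with ⟨_, h1⟩ | ⟨_, _, h1⟩ | ⟨_, h1⟩ <;> rcases h2 with ⟨_, h2⟩ | ⟨_, _, h2⟩ | ⟨_, h2⟩ <;>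
    refine max_le (max_le ?_ ?_) (max_le ?_ ?_) <;> linarith
  · have : s - α + A ≤ max (max 0 (A + Q - t)) (max (s - α + A) (s - q + Q)) :=
      le_max_of_le_right (le_max_left _ _)
    linarith
  · have : s - q + Q ≤ max (max 0 (A + Q - t)) (max (s - α + A) (s - q + Q)) :=
      le_max_of_le_right (le_max_right _ _)
    linarith
  · have : max (max 0 (A + Q - t)) (max (s - α + A) (s - q + Q)) ≤
        t + 2 * δ - α - q + s - t + A + Q := by
      rcases h1 with ⟨_, h1⟩ | ⟨_, _, h1⟩ | ⟨_, h1⟩ <;>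
      rcases h2 with ⟨_, h2⟩ | ⟨_, _, h2⟩ | ⟨_, h2⟩ <;>
      refine max_le (max_le ?_ ?_) (max_le ?_ ?_) <;> linarith
    linarith

/-- box from marginals and the joint probability of (true,true) -/
def mkBox {n m : ℕ} (W : ℝ) (α : Fin n → ℝ) (q : Fin m → ℝ) (s : Fin n → Fin m → ℝ) :
    Bool → Bool → Fin n → Fin m → ℝ
  | true, true, x, y => s x y
  | true, false, x, y => α x - s x y
  | false, true, x, y => q y - s x y
  | false, false, x, y => W - α x - q y + s x y

lemma mkBox_ubox {n m : ℕ} (W : ℝ) (α : Fin n → ℝ) (q : Fin m → ℝ) (s : Fin n → Fin m → ℝ)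
    (h1 : ∀ x y, 0 ≤ s x y) (h2 : ∀ x y, s x y ≤ α x) (h3 : ∀ x y, s x y ≤ q y)
    (h4 : ∀ x y, 0 ≤ W - α x - q y + s x y) : UBox W (mkBox W α q s) := by
  refine ⟨fun a b x y => ?_, fun x y => ?_, fun a x y y' => ?_, fun b y x x' => ?_⟩
  · have := h1 x y
    have := h2 x y
    have := h3 x y
    have := h4 x y
    cases a <;> cases b <;> simp only [mkBox] <;> linarith
  · simp only [Fintype.sum_bool, mkBox]; ring
  · cases a <;> simp only [Fintype.sum_bool, mkBox] <;> ring
  · cases b <;> simp only [Fintype.sum_bool, mkBox] <;> ring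

lemma ubox_eq {n m : ℕ} [NeZero n] [NeZero m] {W : ℝ} {p : Bool → Bool → Fin n → Fin m → ℝ}
    (h : UBox W p) :
    p = mkBox W (fun x => ∑ b, p true b x 0) (fun y => ∑ a, p a true 0 y) (p true true) := by
  obtain ⟨h1, h2, h3, h4⟩ := h
  funext a b x y
  have e2 := h2 x y
  have e3 := h3 true x 0 y
  have e4 := h4 true y 0 x
  simp only [Fintype.sum_bool] at e2 e3 e4
  cases a <;> cases b <;> simp only [mkBox, Fintype.sum_bool] <;> linarith

lemma ubox_main {n m : ℕ} [NeZero n] [NeZero m] {c : Bool → Bool → Fin n → Fin m → ℝ}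
    {βmax β1max W : ℝ}
    (hmax : IsGreatest {v : ℝ | ∃ p, IsNSBox p ∧ v = bell c p} βmax)
    (h1max : IsGreatest {v : ℝ | ∃ p, IsNSBox p ∧ DetB1 p ∧ v = bell c p} β1max)
    {p : Bool → Bool → Fin n → Fin m → ℝ} (h : UBox W p) :
    bell c p ≤ W * βmax -
      (βmax - β1max) * |(∑ a, p a true 0 0) - ∑ a, p a false 0 0| := by
  have hp := ubox_eq h
  have hnn := h.1
  have hW := h.2.1 0 0
  set α : Fin n → ℝ := fun x => ∑ b, p true b x 0 with hα
  set q : Fin m → ℝ := fun y => ∑ a, p a true 0 y with hq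
  set s := p true true with hs
  have hq1 : ∑ a, p a false 0 0 = W - q 0 := by
    rw [← hW, hq]; simp only [Fintype.sum_bool]; ring
  have hq0 : 0 ≤ q 0 := sum_nonneg fun a _ => hnn a true 0 0
  have hqW : 0 ≤ W - q 0 := by rw [← hq1]; exact sum_nonneg fun a _ => hnn a false 0 0
  have ht' : (∑ a, p a true 0 0) - ∑ a, p a false 0 0 = 2 * q 0 - W := by
    rw [hq1]; change q 0 - _ = _; ring
  rw [ht']
  obtain ⟨t, ht⟩ : ∃ t, t = |2 * q 0 - W| := ⟨_, rfl⟩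
  rw [← ht]
  obtain ⟨δ, hδ⟩ : ∃ δ, δ = (W - t) / 2 := ⟨_, rfl⟩
  have ht0 : 0 ≤ t := ht ▸ abs_nonneg _
  have htW : t ≤ W := by rw [ht, abs_le]; constructor <;> linarith
  have hWt : W = t + 2 * δ := by rw [hδ]; ring
  have e2 : ∀ x y, s x y ≤ α x := fun x y => by
    have := hnn true false x y
    rw [hp] at this; simp only [mkBox] at this; linarith
  have e3 : ∀ x y, s x y ≤ q y := fun x y => by
    have := hnn false true x y
    rw [hp] at this; simp only [mkBox] at this; linarith
  have e4 : ∀ x y, 0 ≤ W - α x - q y + s x y := fun x y => by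
    have := hnn false false x y
    rw [hp] at this; simpa only [mkBox] using this
  have K := fun x y => key W δ t (α x) (q y) (s x y) (by linarith) ht0 hWt (hnn _ _ _ _)
    (e2 x y) (e3 x y) (e4 x y)
  choose s' k1 k2 k3 k4 k5 k6 k7 k8 using K
  obtain ⟨A, hA⟩ : ∃ A : Fin n → ℝ, A = fun x => clampf t δ (α x) := ⟨_, rfl⟩
  obtain ⟨Q, hQ⟩ : ∃ Q : Fin m → ℝ, Q = fun y => clampf t δ (q y) := ⟨_, rfl⟩
  have hA' : ∀ x, clampf t δ (α x) = A x := fun x => by rw [hA]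
  have hQ' : ∀ y, clampf t δ (q y) = Q y := fun y => by rw [hQ]
  simp only [hA', hQ'] at k1 k2 k3 k4 k5 k6 k7 k8
  have R1 : UBox t (mkBox t A Q s') := mkBox_ubox _ _ _ _ k1 k2 k3 k4
  have R2 : UBox (W - t) (mkBox (W - t) (fun x => α x - A x) (fun y => q y - Q y)
      (fun x y => s x y - s' x y)) := by
    apply mkBox_ubox
    · intro x y; linarith [k5 x y]
    · intro x y; linarith [k6 x y]
    · intro x y; linarith [k7 x y]
    · intro x y; linarith [k8 x y]
  have hQ0 : Q 0 = t ∨ Q 0 = 0 := by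
    have hc := clamp_cases t δ (q 0) ht0
    rw [hQ'] at hc
    rcases le_total 0 (2 * q 0 - W) with h0 | h0
    · left
      rw [abs_of_nonneg h0] at ht
      rcases hc with ⟨_, h1⟩ | ⟨_, _, h1⟩ | ⟨_, h1⟩ <;> linarith
    · right
      rw [abs_of_nonpos h0] at ht
      rcases hc with ⟨_, h1⟩ | ⟨_, _, h1⟩ | ⟨_, h1⟩ <;> linarith
  have D1 : UDet t (mkBox t A Q s') := by
    rcases hQ0 with h0 | h0
    · refine ⟨true, fun x b => ?_⟩
      cases b <;> simp [mkBox, h0]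
    · refine ⟨false, fun x b => ?_⟩
      cases b <;> simp [mkBox, h0]
  have hsum : p = fun a b x y => mkBox t A Q s' a b x y + mkBox (W - t) (fun x => α x - A x)
      (fun y => q y - Q y) (fun x y => s x y - s' x y) a b x y := by
    rw [hp]
    funext a b x y
    cases a <;> cases b <;> simp only [mkBox] <;> ring
  have B1 := ubox_bell_det h1max R1 D1
  have B2 := ubox_bell hmax R2
  have : bell c p = _ := (congrArg (bell c) hsum).trans (bell_add c _ _)
  rw [this]
  linarith


/-- Monogamy relation with the relevance `w = β^max − β₁^max` of Bob's observable `B₁`: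
for every tripartite no-signaling box `p̃` (Grace with a single input and a binary output),
`β(p̃_AB) + w·⟨B₁ᵍB₁⟩ ≤ β^max`. -/
theorem monogamy_relevance {n m : ℕ} [NeZero n] [NeZero m]
    (c : Bool → Bool → Fin n → Fin m → ℝ) (βmax β1max : ℝ)
    (hmax : IsGreatest {v : ℝ | ∃ p, IsNSBox p ∧ v = bell c p} βmax)
    (h1max : IsGreatest {v : ℝ | ∃ p, IsNSBox p ∧ DetB1 p ∧ v = bell c p} β1max)
    (pt : Bool → Bool → Bool → Fin n → Fin m → ℝ) (hpt : IsNS3Box pt) :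
    bell c (fun a b x y => ∑ g, pt a b g x y) + (βmax - β1max) * corrBG pt ≤ βmax := by
  have hU : ∀ g, UBox (∑ a, ∑ b, pt a b g 0 0) (fun a b x y => pt a b g x y) := by
    intro g
    obtain ⟨h1, h2, h3, h4⟩ := hpt
    refine ⟨fun a b x y => h1 a b g x y, fun x y => ?_, fun a x y y' => h3 a g x y y',
      fun b y x x' => h4 b g y x x'⟩
    change ∑ a, ∑ b, pt a b g x y = _
    calc ∑ a, ∑ b, pt a b g x y = ∑ a, ∑ b, pt a b g x 0 :=
          sum_congr rfl fun a _ => h3 a g x y 0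
      _ = ∑ b, ∑ a, pt a b g x 0 := sum_comm
      _ = ∑ b, ∑ a, pt a b g 0 0 := sum_congr rfl fun b _ => h4 b g 0 x 0
      _ = _ := sum_comm
  have hw : 0 ≤ βmax - β1max := by
    obtain ⟨p, hp, _, hv⟩ := h1max.1
    linarith [hmax.2 ⟨p, hp, hv⟩]
  have Mt := ubox_main hmax h1max (hU true)
  have Mf := ubox_main hmax h1max (hU false)
  have hb : bell c (fun a b x y => ∑ g, pt a b g x y) =
      bell c (fun a b x y => pt a b true x y) + bell c (fun a b x y => pt a b false x y) := by
    simp only [Fintype.sum_bool]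
    exact bell_add c _ _
  have hone := hpt.2.1 0 0
  obtain ⟨zt, hzt⟩ : ∃ z, z = (∑ a, pt a true true 0 0) - ∑ a, pt a false true 0 0 := ⟨_, rfl⟩
  obtain ⟨zf, hzf⟩ : ∃ z, z = (∑ a, pt a true false 0 0) - ∑ a, pt a false false 0 0 := ⟨_, rfl⟩
  have hc : corrBG pt = zt - zf := by
    rw [hzt, hzf]
    simp [corrBG, sgn]; ring
  have hWs : (∑ a, ∑ b, pt a b true 0 0) + (∑ a, ∑ b, pt a b false 0 0) = 1 := by
    rw [← hone]; simp only [Fintype.sum_bool]; ring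
  rw [← hzt] at Mt
  rw [← hzf] at Mf
  generalize (∑ a, ∑ b, pt a b true 0 0) = Wt at *
  generalize (∑ a, ∑ b, pt a b false 0 0) = Wf at *
  rw [hb, hc]
  have i1 := mul_le_mul_of_nonneg_left (le_abs_self zt) hw
  have i2 := mul_le_mul_of_nonneg_left (neg_le_abs zf) hw
  have i3 : Wt * βmax + Wf * βmax = βmax := by rw [← add_mul, hWs, one_mul]
  linarith
end

section
/- Consider the CHSH scenario: Alice and Bob each have two inputs and binary ±1 outputs. Let p be a bipartite no-signaling box with CHSH value β_CHSH(p) = ⟨A₁B₁⟩ + ⟨A₁B₂⟩ + ⟨A₂B₁⟩ − ⟨A₂B₂⟩, and let p̃(a,b,g|x,y) be a tripartite no-signaling box (Grace has a single input, binary output) implementing a gentle measurement of Bob's observable B₁ with parameter ε ∈ [0,1/2], i.e. p̃(b₁|y=1,a,x) = p(b₁|y=1,a,x) and p̃(g = b₁|b₁,y=1,a,x) = 1/2 + ε if g = b₁, 1/2 − ε otherwise (for all a,x with positive conditioning probability). Then the disturbance of Bob's second observable, D(B₂) = Σ_{x=1,2} (1/2) Σ_a p(a|x) Σ_b |p(b|y=2,a,x)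 − p̃(b|y=2,a,x)|, satisfies D(B₂) ≥ 2ε − (1/2)(4 − β_CHSH(p)). -/
open Finset

/-- The correlator `⟨A_x B_y⟩` of a bipartite box with binary `±1` outputs. -/
def corr {n m : ℕ} (p : Bool → Bool → Fin n → Fin m → ℝ)
    (x : Fin n) (y : Fin m) : ℝ :=
  ∑ a, ∑ b, sgn a * sgn b * p a b x y

/-- The CHSH quantity `⟨A₁B₁⟩ + ⟨A₁B₂⟩ + ⟨A₂B₁⟩ − ⟨A₂B₂⟩`. -/
def chsh (p : Bool → Bool → Fin 2 → Fin 2 → ℝ) : ℝ :=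
  corr p 0 0 + corr p 0 1 + corr p 1 0 - corr p 1 1

/-- Gentle measurement of `B₁` in the CHSH scenario: the disturbance of Bob's second
observable satisfies `D(B₂) ≥ 2ε − ½(4 − β_CHSH(p))`. -/
theorem chsh_gain_disturbance (ε : ℝ) (hε : ε ∈ Set.Icc (0 : ℝ) (1/2))
    (p : Bool → Bool → Fin 2 → Fin 2 → ℝ) (hp : IsNSBox p)
    (pt : Bool → Bool → Bool → Fin 2 → Fin 2 → ℝ) (hpt : IsNS3Box pt)
    (hA : ∀ a x, (∑ b, ∑ g, pt a b g x 0) = ∑ b, p a b x 0)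
    (hi : ∀ a x, 0 < (∑ b, p a b x 0) → ∀ b,
      (∑ g, pt a b g x 0) / (∑ b', ∑ g, pt a b' g x 0) =
        p a b x 0 / (∑ b', p a b' x 0))
    (hii : ∀ a x b, 0 < (∑ g, pt a b g x 0) → ∀ g,
      pt a b g x 0 / (∑ g', pt a b g' x 0) =
        if g = b then 1/2 + ε else 1/2 - ε) :
    (∑ x, (1/2 : ℝ) * ∑ a, (∑ b, p a b x 0) *
        ∑ b, |p a b x 1 / (∑ b', p a b' x 1) -
          (∑ g, pt a b g x 1) / (∑ b', ∑ g, pt a b' g x 1)|) ≥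
      2 * ε - (1/2) * (4 - chsh p) := by
  obtain ⟨p0, p1, p2, p3⟩ := hp
  obtain ⟨q0, q1, q2, q3⟩ := hpt
  obtain ⟨he0, he1⟩ := hε
  have key : ∀ a x, (∑ b, p a b x 0) *
        ∑ b, |p a b x 1 / (∑ b', p a b' x 1) -
          (∑ g, pt a b g x 1) / (∑ b', ∑ g, pt a b' g x 1)|
        = ∑ b, |p a b x 1 - ∑ g, pt a b g x 1| := by
    intro a x
    have e1 : (∑ b, p a b x 1) = ∑ b, p a b x 0 := p2 a x 1 0
    have e2 : (∑ b, ∑ g, pt a b g x 1) = ∑ b, p a b x 0 := by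
      rw [← hA a x, Finset.sum_comm, Finset.sum_comm (f := fun b g => pt a b g x 0)]
      exact Finset.sum_congr rfl (fun g _ => q2 a g x 1 0)
    rw [e1, e2, Finset.mul_sum]
    refine Finset.sum_congr rfl (fun b _ => ?_)
    have hM : 0 ≤ ∑ b, p a b x 0 := Finset.sum_nonneg (fun b _ => p0 a b x 0)
    have hq : ∀ b, 0 ≤ ∑ g, pt a b g x 1 := fun b => Finset.sum_nonneg (fun g _ => q0 a b g x 1)
    rcases hM.eq_or_lt with h | h
    · have z1 : p a b x 1 = 0 :=
        (Finset.sum_eq_zero_iff_of_nonneg (fun b _ => p0 a b x 1)).1 (e1.trans h.symm) b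
          (Finset.mem_univ b)
      have z2 : ∑ g, pt a b g x 1 = 0 :=
        (Finset.sum_eq_zero_iff_of_nonneg (fun b _ => hq b)).1 (e2.trans h.symm) b
          (Finset.mem_univ b)
      rw [z1, z2, ← h]; simp
    · rw [← sub_div, abs_div, abs_of_pos h]
      field_simp
  have e3 : ∀ a b x, ∑ g, pt a b g x 0 = p a b x 0 := by
    intro a b x
    have hM : 0 ≤ ∑ b, p a b x 0 := Finset.sum_nonneg (fun b _ => p0 a b x 0)
    have hq : ∀ b, 0 ≤ ∑ g, pt a b g x 0 := fun b => Finset.sum_nonneg (fun g _ => q0 a b g x 0)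
    rcases hM.eq_or_lt with h | h
    · have z1 : p a b x 0 = 0 :=
        (Finset.sum_eq_zero_iff_of_nonneg (fun b _ => p0 a b x 0)).1 h.symm b
          (Finset.mem_univ b)
      have z2 : ∑ g, pt a b g x 0 = 0 :=
        (Finset.sum_eq_zero_iff_of_nonneg (fun b _ => hq b)).1 ((hA a x).trans h.symm) b
          (Finset.mem_univ b)
      rw [z1, z2]
    · have := hi a x h b
      rw [hA a x] at this
      exact (div_left_inj' h.ne').1 this
  have e4 : ∀ a b g x, pt a b g x 0 = (if g = b then 1/2 + ε else 1/2 - ε) * p a b x 0 := by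
    intro a b g x
    have h0 := p0 a b x 0
    rcases h0.eq_or_lt with h | h
    · rw [← h, mul_zero]
      exact (Finset.sum_eq_zero_iff_of_nonneg (fun g _ => q0 a b g x 0)).1
        ((e3 a b x).trans h.symm) g (Finset.mem_univ g)
    · have := hii a x b (by rw [e3]; exact h) g
      rw [e3] at this
      rw [← this]; field_simp
  simp only [key]
  have ab : ∀ a b x, p a b x 1 - ∑ g, pt a b g x 1 ≤ |p a b x 1 - ∑ g, pt a b g x 1| ∧
      -(p a b x 1 - ∑ g, pt a b g x 1) ≤ |p a b x 1 - ∑ g, pt a b g x 1| :=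
    fun a b x => ⟨le_abs_self _, neg_le_abs _⟩
  have ns : ∀ a g x, ∑ b, pt a b g x 1 = ∑ b, (if g = b then 1/2 + ε else 1/2 - ε) * p a b x 0 := by
    intro a g x
    rw [q2 a g x 1 0]
    exact Finset.sum_congr rfl (fun b _ => e4 a b g x)
  -- Grace's and Bob's outputs coexist
  have t1 : (∑ a, ∑ g, ∑ b, sgn a * sgn g * pt a b g 0 1)
      + (∑ a, ∑ g, ∑ b, sgn a * sgn g * pt a b g 1 1)
      + (∑ a, ∑ g, ∑ b, sgn a * sgn b * pt a b g 0 1)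
      - (∑ a, ∑ g, ∑ b, sgn a * sgn b * pt a b g 1 1) ≤ 2 := by
    have n0 := q1 0 1
    have n1 := q1 1 1
    have c := fun b g => q3 b g 1 0 1
    have c1 := c true true
    have c2 := c true false
    have c3 := c false true
    have c4 := c false false
    have nn := fun a b g x => q0 a b g x 1
    simp only [Fintype.sum_bool, sgn] at *
    norm_num
    linarith [nn true true true 0, nn true true false 0, nn true false true 0, nn true false false 0,
      nn false true true 0, nn false true false 0, nn false false true 0, nn false false false 0,
      nn true true true 1, nn true true false 1, nn true false true 1, nn true false false 1,
      nn false true true 1, nn false true false 1, nn false false true 1, nn false false false 1]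
  have t2 : ∀ x, (∑ a, ∑ g, ∑ b, sgn a * sgn g * pt a b g x 1) = 2 * ε * corr p x 0 := by
    intro x
    simp only [← Finset.mul_sum, ns, corr]
    simp [sgn]
    ring
  have t3 : ∀ x, corr p x 0 ≤ 1 := by
    intro x
    have := p1 x 0
    have nn := fun a b => p0 a b x 0
    simp only [corr, Fintype.sum_bool, sgn] at *
    norm_num
    linarith [nn true true, nn true false, nn false true, nn false false]
  rw [t2, t2] at t1
  have t4 : (1 - 2 * ε) * (corr p 0 0 + corr p 1 0) ≤ (1 - 2 * ε) * 2 :=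
    mul_le_mul_of_nonneg_left (by linarith [t3 0, t3 1]) (by linarith)
  have t5 : corr p 0 1 - corr p 1 1 - ((∑ a, ∑ g, ∑ b, sgn a * sgn b * pt a b g 0 1)
      - (∑ a, ∑ g, ∑ b, sgn a * sgn b * pt a b g 1 1)) ≤
      (∑ a, ∑ b, |p a b 0 1 - ∑ g, pt a b g 0 1|) + ∑ a, ∑ b, |p a b 1 1 - ∑ g, pt a b g 1 1| := by
    clear t1 t2 t3 t4 ns e4 e3 key hi hii hA
    simp only [corr, Fintype.sum_bool, sgn] at *
    norm_num
    linarith [(ab true true 0).1, (ab true false 0).2, (ab false true 0).2, (ab false false 0).1,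
      (ab true true 1).2, (ab true false 1).1, (ab false true 1).1, (ab false false 1).2]
  rw [Fin.sum_univ_two]
  unfold chsh
  linarith
end

section
/- Consider the chain Bell scenario: Alice and Bob each have n inputs and binary ±1 outputs, with chain Bell quantity β_chain(p) = Σ_{k=1}^{n−1}(⟨A_kB_k⟩ + ⟨A_kB_{k+1}⟩) + ⟨A_nB_n⟩ − ⟨A_nB_1⟩. Let p be a bipartite no-signaling box and p̃ a tripartite no-signaling box (Grace has a single input, binary output) implementing a gentle measurement of Bob's observable B₁ with parameter ε ∈ [0,1/2], i.e. p̃(b₁|y=1,a,x) = p(b₁|y=1,a,x) and p̃(g = b₁|b₁,y=1,a,x) = 1/2 + ε if g = b₁, 1/2 − ε otherwise (for all a,x with positive conditioning probability). Then the average total disturbance 𝒟 = Σ_x (1/n) Σ_a p(a|x) Σ_{y ≠ 1} Σ_b |p(b|y,a,x) − p̃(b|y,a,x)| satisfies 𝒟 ≥ (4/n)·ε − (1/n)(2n − β_chain(p)). -/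
open Finset

/-- The chain Bell quantity
`β_chain = Σ_{k=1}^{n−1}(⟨A_kB_k⟩ + ⟨A_kB_{k+1}⟩) + ⟨A_nB_n⟩ − ⟨A_nB_1⟩`. -/
def chainBell {n : ℕ} (hn : 0 < n) (p : Bool → Bool → Fin n → Fin n → ℝ) : ℝ :=
  (∑ i : Fin (n - 1),
    (corr p ⟨i.1, by have := i.2; omega⟩ ⟨i.1, by have := i.2; omega⟩ +
      corr p ⟨i.1, by have := i.2; omega⟩ ⟨i.1 + 1, by have := i.2; omega⟩)) +
  corr p ⟨n - 1, by omega⟩ ⟨n - 1, by omega⟩ - corr p ⟨n - 1, by omega⟩ ⟨0, hn⟩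

lemma corr_bounds {n m : ℕ} (r : Bool → Bool → Fin n → Fin m → ℝ)
    (h0 : ∀ a b x y, 0 ≤ r a b x y) (W : ℝ) (A : Fin n → ℝ) (B : Fin m → ℝ)
    (hW : ∀ x y, ∑ a, ∑ b, r a b x y = W)
    (hA : ∀ x y, ∑ a, ∑ b, sgn a * r a b x y = A x)
    (hB : ∀ x y, ∑ a, ∑ b, sgn b * r a b x y = B y) (g : Bool) (x : Fin n) (y : Fin m) :
    corr r x y ≤ W + sgn g * (A x - B y) ∧ corr r x y ≤ W - sgn g * (A x - B y) ∧
      - corr r x y ≤ W - sgn g * (A x + B y) := by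
  rw [← hW x y, ← hA x y, ← hB x y]
  have h1 := h0 true true x y
  have h2 := h0 true false x y
  have h3 := h0 false true x y
  have h4 := h0 false false x y
  cases g <;> simp [corr, sgn] <;> refine ⟨?_, ?_, ?_⟩ <;> linarith

lemma chain_le {m : ℕ} (r : Bool → Bool → Fin (m+1) → Fin (m+1) → ℝ)
    (h0 : ∀ a b x y, 0 ≤ r a b x y) (W : ℝ) (A : Fin (m+1) → ℝ) (B : Fin (m+1) → ℝ)
    (hW : ∀ x y, ∑ a, ∑ b, r a b x y = W)
    (hA : ∀ x y, ∑ a, ∑ b, sgn a * r a b x y = A x)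
    (hB : ∀ x y, ∑ a, ∑ b, sgn b * r a b x y = B y) (g : Bool) :
    chainBell (Nat.succ_pos m) r ≤ 2 * (m + 1) * W - 2 * (sgn g * B 0) := by
  have key := corr_bounds r h0 W A B hW hA hB g
  have hs : (∑ i : Fin m, (corr r i.castSucc i.castSucc + corr r i.castSucc i.succ)) ≤
      ∑ i : Fin m, (2 * W + sgn g * (B i.succ - B i.castSucc)) := by
    apply Finset.sum_le_sum
    intro i _
    have h1 := (key i.castSucc i.castSucc).1
    have h2 := (key i.castSucc i.succ).2.1
    linarith
  have ht : ∑ i : Fin m, (2 * W + sgn g * (B i.succ - B i.castSucc)) =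
      2 * m * W + sgn g * (B (Fin.last m) - B 0) := by
    rw [Finset.sum_add_distrib, ← Finset.mul_sum, ← Finset.mul_sum, Finset.sum_sub_distrib]
    have e1 := Fin.sum_univ_succ B
    have e2 := Fin.sum_univ_castSucc B
    have e3 : ∑ i : Fin m, B i.succ - ∑ i : Fin m, B i.castSucc = B (Fin.last m) - B 0 := by
      linarith
    rw [e3]; simp; ring
  have h3 := (key (Fin.last m) (Fin.last m)).1
  have h4 := (key (Fin.last m) 0).2.2
  have hc : chainBell (Nat.succ_pos m) r =
    (∑ i : Fin m, (corr r i.castSucc i.castSucc + corr r i.castSucc i.succ)) +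
      corr r (Fin.last m) (Fin.last m) - corr r (Fin.last m) 0 := rfl
  rw [hc]
  linarith

lemma chain_diff {m : ℕ} (p q : Bool → Bool → Fin (m+1) → Fin (m+1) → ℝ)
    (h : ∀ a b x, p a b x 0 = q a b x 0) :
    chainBell (Nat.succ_pos m) p - chainBell (Nat.succ_pos m) q ≤
      ∑ x, ∑ y ∈ Finset.univ.filter (fun y => y ≠ (0 : Fin (m+1))),
        ∑ a, ∑ b, |p a b x y - q a b x y| := by
  set d : Fin (m+1) → Fin (m+1) → ℝ := fun x y => ∑ a, ∑ b, |p a b x y - q a b x y| with hd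
  have d0 : ∀ x y, 0 ≤ d x y := fun x y => by positivity
  have dz : ∀ x, d x 0 = 0 := fun x => by simp [hd, h]
  have hcd : ∀ x y, corr p x y - corr q x y ≤ d x y := by
    intro x y
    simp only [hd, corr, ← Finset.sum_sub_distrib]
    apply Finset.sum_le_sum; intro a _
    apply Finset.sum_le_sum; intro b _
    have h1 := le_abs_self (p a b x y - q a b x y)
    have h2 := neg_abs_le (p a b x y - q a b x y)
    cases a <;> cases b <;> simp [sgn] <;> linarith
  have hc0 : ∀ x, corr p x 0 = corr q x 0 := fun x => by simp [corr, h]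
  have hf : ∀ x, ∑ y ∈ Finset.univ.filter (fun y => y ≠ (0 : Fin (m+1))), d x y = ∑ y, d x y := by
    intro x
    apply Finset.sum_subset (Finset.subset_univ _)
    intro y _ hy
    have : y = 0 := by simpa using hy
    rw [this, dz]
  have hc : ∀ r, chainBell (Nat.succ_pos m) r =
    (∑ i : Fin m, (corr r i.castSucc i.castSucc + corr r i.castSucc i.succ)) +
      corr r (Fin.last m) (Fin.last m) - corr r (Fin.last m) 0 := fun r => rfl
  change _ ≤ ∑ x, ∑ y ∈ Finset.univ.filter (fun y => y ≠ (0 : Fin (m+1))), d x y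
  simp only [hf]
  rw [hc, hc, hc0, Fin.sum_univ_castSucc]
  have hl : d (Fin.last m) (Fin.last m) ≤ ∑ y, d (Fin.last m) y :=
    Finset.single_le_sum (fun y _ => d0 _ y) (Finset.mem_univ _)
  have hs : (∑ i : Fin m, (corr p i.castSucc i.castSucc + corr p i.castSucc i.succ)) -
      (∑ i : Fin m, (corr q i.castSucc i.castSucc + corr q i.castSucc i.succ)) ≤
      ∑ i : Fin m, ∑ y, d i.castSucc y := by
    rw [← Finset.sum_sub_distrib]
    apply Finset.sum_le_sum
    intro i _
    have h1 := hcd i.castSucc i.castSucc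
    have h2 := hcd i.castSucc i.succ
    have h3 : d i.castSucc i.castSucc + d i.castSucc i.succ ≤ ∑ y, d i.castSucc y := by
      rw [← Finset.sum_pair (f := fun y => d i.castSucc y) (Fin.castSucc_lt_succ (i := i)).ne]
      exact Finset.sum_le_sum_of_subset_of_nonneg (Finset.subset_univ _) (fun y _ _ => d0 _ y)
    linarith
  have h5 := hcd (Fin.last m) (Fin.last m)
  linarith

/-- Gentle measurement of `B₁` in the chain Bell scenario: the average total disturbance
satisfies `𝒟 ≥ (4/n)·ε − (1/n)(2n − β_chain(p))`. -/
theorem chain_gain_disturbance {n : ℕ} (hn : 0 < n)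
    (ε : ℝ) (hε : ε ∈ Set.Icc (0 : ℝ) (1/2))
    (p : Bool → Bool → Fin n → Fin n → ℝ) (hp : IsNSBox p)
    (pt : Bool → Bool → Bool → Fin n → Fin n → ℝ) (hpt : IsNS3Box pt)
    (hA : ∀ a x, (∑ b, ∑ g, pt a b g x ⟨0, hn⟩) = ∑ b, p a b x ⟨0, hn⟩)
    (hi : ∀ a x, 0 < (∑ b, p a b x ⟨0, hn⟩) → ∀ b,
      (∑ g, pt a b g x ⟨0, hn⟩) / (∑ b', ∑ g, pt a b' g x ⟨0, hn⟩) =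
        p a b x ⟨0, hn⟩ / (∑ b', p a b' x ⟨0, hn⟩))
    (hii : ∀ a x b, 0 < (∑ g, pt a b g x ⟨0, hn⟩) → ∀ g,
      pt a b g x ⟨0, hn⟩ / (∑ g', pt a b g' x ⟨0, hn⟩) =
        if g = b then 1/2 + ε else 1/2 - ε) :
    (∑ x, (1 / (n : ℝ)) * ∑ a, (∑ b, p a b x ⟨0, hn⟩) *
        ∑ y ∈ Finset.univ.filter (fun y => y ≠ (⟨0, hn⟩ : Fin n)), ∑ b,
          |p a b x y / (∑ b', p a b' x y) -
            (∑ g, pt a b g x y) / (∑ b', ∑ g, pt a b' g x y)|) ≥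
      (4 / (n : ℝ)) * ε - (1 / (n : ℝ)) * (2 * n - chainBell hn p) := by
  obtain ⟨m, rfl⟩ : ∃ m, n = m + 1 := ⟨n - 1, by omega⟩
  have e0 : (⟨0, hn⟩ : Fin (m+1)) = 0 := rfl
  simp only [e0] at *
  obtain ⟨p0, p1, pA, pB⟩ := hp
  obtain ⟨t0, t1, tA, tB⟩ := hpt
  set q : Bool → Bool → Fin (m+1) → Fin (m+1) → ℝ := fun a b x y => ∑ g, pt a b g x y with hq
  have q0 : ∀ a b x y, 0 ≤ q a b x y := fun a b x y => Finset.sum_nonneg fun g _ => t0 a b g x y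
  have hmarg : ∀ a x y, ∑ b, q a b x y = ∑ b, p a b x y := by
    intro a x y
    rw [pA a x y 0, ← hA a x]
    have h1 := tA a true x y 0
    have h2 := tA a false x y 0
    simp only [hq, Fintype.sum_bool] at *
    linarith
  have hpq : ∀ a b x, p a b x 0 = q a b x 0 := by
    intro a b x
    have hnn : 0 ≤ ∑ b, p a b x 0 := Finset.sum_nonneg fun b _ => p0 a b x 0
    rcases hnn.lt_or_eq with h | h
    · have h1 := hi a x h b
      rw [hA a x] at h1
      exact ((div_left_inj' h.ne').1 h1).symm
    · have h1 := (Finset.sum_eq_zero_iff_of_nonneg (fun b _ => p0 a b x 0)).1 h.symm b (mem_univ _)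
      have h2 := (Finset.sum_eq_zero_iff_of_nonneg (fun b _ => q0 a b x 0)).1
        ((hmarg a x 0).trans h.symm) b (mem_univ _)
      rw [h1, h2]
  have hg : ∀ a b g x, pt a b g x 0 = q a b x 0 * (if g = b then 1/2 + ε else 1/2 - ε) := by
    intro a b g x
    rcases (q0 a b x 0).lt_or_eq with h | h
    · have h1 := hii a x b h g
      rw [div_eq_iff h.ne'] at h1
      rw [h1, mul_comm]
    · have h1 := (Finset.sum_eq_zero_iff_of_nonneg (fun g _ => t0 a b g x 0)).1 h.symm g (mem_univ _)
      rw [h1, ← h, zero_mul]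
  have hchain : ∀ g, chainBell hn (fun a b x y => pt a b g x y) ≤
      2 * (m + 1) * (∑ a, ∑ b, pt a b g 0 0) -
        2 * (sgn g * ∑ a, ∑ b, sgn b * pt a b g 0 0) := by
    intro g
    refine chain_le (fun a b x y => pt a b g x y) (fun a b x y => t0 a b g x y) _
      (fun x => ∑ a, ∑ b, sgn a * pt a b g x 0) (fun y => ∑ a, ∑ b, sgn b * pt a b g 0 y)
      ?_ ?_ ?_ g
    · intro x y
      have h1 := tA true g x y 0
      have h2 := tA false g x y 0
      have h3 := tB true g 0 x 0
      have h4 := tB false g 0 x 0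
      simp only [Fintype.sum_bool] at *
      linarith
    · intro x y
      simp only [← Finset.mul_sum]
      simp only [tA _ g x y 0]
    · intro x y
      rw [Finset.sum_comm]
      simp only [← Finset.mul_sum]
      rw [Finset.sum_comm (f := fun a b => sgn b * pt a b g 0 y)]
      simp only [← Finset.mul_sum]
      simp only [tB _ g y x 0]
  have hadd : chainBell hn q = chainBell hn (fun a b x y => pt a b true x y) +
      chainBell hn (fun a b x y => pt a b false x y) := by
    have hc : ∀ x y, corr q x y = corr (fun a b x y => pt a b true x y) x y +
        corr (fun a b x y => pt a b false x y) x y := by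
      intro x y
      simp only [corr, hq, Fintype.sum_bool]
      ring
    simp only [chainBell, hc, Finset.sum_add_distrib]
    ring
  have hβ : chainBell hn q ≤ 2 * (m + 1) - 4 * ε := by
    have h1 := hchain true
    have h2 := hchain false
    have h3 : ∑ a, ∑ b, q a b 0 0 = 1 := t1 0 0
    simp only [hg] at h1 h2
    simp only [Fintype.sum_bool] at h1 h2 h3
    simp [sgn] at h1 h2
    rw [hadd]
    have h4 : q false false 0 0 = 1 - (q true true 0 0 + q true false 0 0 + q false true 0 0) := by
      linarith
    rw [h4] at h1 h2
    refine (add_le_add h1 h2).trans (le_of_eq ?_)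
    ring
  have hdiff := chain_diff p q hpq
  have hD : ∀ x, (∑ a, (∑ b, p a b x 0) *
        ∑ y ∈ Finset.univ.filter (fun y => y ≠ (0 : Fin (m+1))), ∑ b,
          |p a b x y / (∑ b', p a b' x y) - q a b x y / (∑ b', q a b' x y)|) =
      ∑ y ∈ Finset.univ.filter (fun y => y ≠ (0 : Fin (m+1))),
        ∑ a, ∑ b, |p a b x y - q a b x y| := by
    intro x
    rw [Finset.sum_comm]
    refine Finset.sum_congr rfl fun a _ => ?_
    rw [Finset.mul_sum]
    refine Finset.sum_congr rfl fun y _ => ?_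
    rw [Finset.mul_sum]
    refine Finset.sum_congr rfl fun b _ => ?_
    rw [hmarg, pA a x 0 y, ← sub_div, abs_div]
    have hnn : 0 ≤ ∑ b, p a b x y := Finset.sum_nonneg fun b _ => p0 a b x y
    rw [abs_of_nonneg hnn]
    rcases hnn.lt_or_eq with h | h
    · field_simp
    · have h1 := (Finset.sum_eq_zero_iff_of_nonneg (fun b _ => p0 a b x y)).1 h.symm b (mem_univ _)
      have h2 := (Finset.sum_eq_zero_iff_of_nonneg (fun b _ => q0 a b x y)).1
        ((hmarg a x y).trans h.symm) b (mem_univ _)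
      rw [h1, h2]; simp
  change (∑ x, (1 / ((m+1 : ℕ) : ℝ)) * ∑ a, (∑ b, p a b x 0) *
        ∑ y ∈ Finset.univ.filter (fun y => y ≠ (0 : Fin (m+1))), ∑ b,
          |p a b x y / (∑ b', p a b' x y) - q a b x y / (∑ b', q a b' x y)|) ≥ _
  simp only [hD]
  rw [← Finset.mul_sum]
  have hm : 0 ≤ 1 / ((m+1 : ℕ) : ℝ) := by positivity
  have hfin : 4 * ε - (2 * ((m+1 : ℕ) : ℝ) - chainBell hn p) ≤
      ∑ x, ∑ y ∈ Finset.univ.filter (fun y => y ≠ (0 : Fin (m+1))),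
        ∑ a, ∑ b, |p a b x y - q a b x y| := by
    push_cast
    linarith
  have := mul_le_mul_of_nonneg_left hfin hm
  refine ge_iff_le.2 (le_trans (le_of_eq ?_) this)
  ring
end

section
/- Let β(p) = Σ_{x=1}^{n} Σ_{y=1}^{m} c_{x,y}⟨A_xB_y⟩ be the Bell expression of a total-function XOR game, i.e. all coefficients satisfy c_{x,y} ∈ {−1,+1}, in a bipartite scenario with n Alice inputs, m Bob inputs, and binary ±1 outputs. Let β_cl^max be the maximum of β over deterministic (local) strategies, i.e. over sign assignments a : {1,…,n} → {−1,+1}, b : {1,…,m} → {−1,+1} of Σ_{x,y} c_{x,y} a_x b_y. Then the maximum of β over all no-signaling boxes in which Bob's observable B₁ is deterministic satisfies β₁^max ≤ max{n(m−1), β_cl^max}. Consequently, since the maximal no-signaling value is β^max = nm, the relevance of B₁ satisfies w ≥ min(n, nm − β_cl^max). -/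
open Finset

noncomputable def indL (u t : ℝ) : ℝ := if t < u then 1 else 0

noncomputable def thrL (u t : ℝ) : ℝ := indL u t - indL (-u) t

lemma indL_int (u : ℝ) : IntervalIntegrable (indL u) MeasureTheory.volume 0 1 := by
  apply Antitone.intervalIntegrable
  intro s t hst
  unfold indL
  split_ifs <;> first | linarith | norm_num

lemma indL_integral (u : ℝ) (hu : u ≤ 1) : ∫ t in (0:ℝ)..1, indL u t = max 0 u := by
  have h : indL u = Set.indicator (Set.Iio u) (fun _ => (1:ℝ)) := by
    funext t
    simp [indL, Set.indicator]
  rw [intervalIntegral.integral_of_le (by norm_num), h,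
    MeasureTheory.integral_indicator measurableSet_Iio,
    MeasureTheory.Measure.restrict_restrict measurableSet_Iio]
  simp only [MeasureTheory.integral_const, smul_eq_mul, mul_one]
  rw [MeasureTheory.measureReal_restrict_apply_univ]
  have h2 : Set.Iio u ∩ Set.Ioc 0 1 = Set.Ioo 0 u := by
    ext t
    simp only [Set.mem_inter_iff, Set.mem_Iio, Set.mem_Ioc, Set.mem_Ioo]
    constructor
    · rintro ⟨a, b, _⟩
      exact ⟨b, a⟩
    · rintro ⟨a, b⟩
      exact ⟨b, a, by linarith⟩
  rw [h2, MeasureTheory.measureReal_def, Real.volume_Ioo, ENNReal.toReal_ofReal']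
  simp [max_comm]

lemma absthr_eq (u v t : ℝ) (ht : 0 ≤ t) : |thrL u t - thrL v t| =
    (indL (max u v) t - indL (min u v) t) +
      (indL (max (-u) (-v)) t - indL (min (-u) (-v)) t) := by
  rcases le_total u v with h | h
  · rw [max_eq_right h, min_eq_left h, max_eq_left (neg_le_neg h), min_eq_right (neg_le_neg h)]
    unfold thrL indL
    split_ifs <;> first | (exfalso; linarith) | norm_num
  · rw [max_eq_left h, min_eq_right h, max_eq_right (neg_le_neg h), min_eq_left (neg_le_neg h)]
    unfold thrL indL
    split_ifs <;> first | (exfalso; linarith) | norm_num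

lemma absthr_int (u v : ℝ) :
    IntervalIntegrable (fun t => |thrL u t - thrL v t|) MeasureTheory.volume 0 1 :=
  ((((indL_int u).sub (indL_int (-u))).sub ((indL_int v).sub (indL_int (-v))))).abs

lemma absthr_integral (u v : ℝ) (hu : |u| ≤ 1) (hv : |v| ≤ 1) :
    ∫ t in (0:ℝ)..1, |thrL u t - thrL v t| = |u - v| := by
  rw [abs_le] at hu hv
  have h : ∫ t in (0:ℝ)..1, |thrL u t - thrL v t| = ∫ t in (0:ℝ)..1,
      ((indL (max u v) t - indL (min u v) t) +
      (indL (max (-u) (-v)) t - indL (min (-u) (-v)) t)) := by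
    apply intervalIntegral.integral_congr
    intro t ht
    rw [Set.uIcc_of_le (by norm_num)] at ht
    exact absthr_eq u v t ht.1
  rw [h, intervalIntegral.integral_add ((indL_int _).sub (indL_int _))
    ((indL_int _).sub (indL_int _)), intervalIntegral.integral_sub (indL_int _) (indL_int _),
    intervalIntegral.integral_sub (indL_int _) (indL_int _)]
  rw [indL_integral _ (max_le hu.2 hv.2), indL_integral _ ((min_le_left _ _).trans hu.2),
    indL_integral _ (max_le (by linarith) (by linarith)),
    indL_integral _ ((min_le_left _ _).trans (by linarith))]
  rcases le_total u v with h | h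
  · rw [max_eq_right h, min_eq_left h, max_eq_left (neg_le_neg h), min_eq_right (neg_le_neg h),
      abs_of_nonpos (by linarith)]
    rcases le_total 0 u with h1 | h1 <;> rcases le_total 0 v with h2 | h2 <;>
      simp [h1, h2] <;> linarith
  · rw [max_eq_left h, min_eq_right h, max_eq_right (neg_le_neg h), min_eq_left (neg_le_neg h),
      abs_of_nonneg (by linarith)]
    rcases le_total 0 u with h1 | h1 <;> rcases le_total 0 v with h2 | h2 <;>
      simp [h1, h2] <;> linarith

lemma thrL_neg (u t : ℝ) : thrL (-u) t = - thrL u t := by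
  simp [thrL]

lemma thrL_vals (u t : ℝ) (ht : 0 ≤ t) : thrL u t = 0 ∨ thrL u t = 1 ∨ thrL u t = -1 := by
  unfold thrL indL
  split_ifs <;> norm_num

lemma row_bound {m : ℕ} (f : Fin m → ℝ) (h : ∀ y, f y ≤ 1) (y₀ : Fin m) (h0 : f y₀ ≤ 0) :
    ∑ y, f y ≤ (m : ℝ) - 1 := by
  have h1 : ∑ y, f y ≤ ∑ y : Fin m, (1 - if y = y₀ then (1:ℝ) else 0) := by
    apply Finset.sum_le_sum
    intro y _
    split_ifs with hy
    · subst hy; linarith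
    · linarith [h y]
  simpa [Finset.sum_sub_distrib] using h1

lemma finite_bound {n m : ℕ} [NeZero m]
    (c : Fin n → Fin m → ℝ) (hc : ∀ x y, c x y = 1 ∨ c x y = -1)
    (βcl : ℝ)
    (hcl : ∀ (a : Fin n → ℝ) (b : Fin m → ℝ),
        (∀ x, a x = 1 ∨ a x = -1) → (∀ y, b y = 1 ∨ b y = -1) →
        ∑ x, ∑ y, c x y * a x * b y ≤ βcl)
    (E : Fin n → ℝ) (F : Fin m → ℝ)
    (hE : ∀ x, E x = 0 ∨ E x = 1 ∨ E x = -1) (hF : ∀ y, F y = 0 ∨ F y = 1 ∨ F y = -1)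
    (hF0 : F 0 ≠ 0) :
    ∑ x, ∑ y, (1 - |E x - c x y * F y|) ≤ max ((n : ℝ) * ((m : ℝ) - 1)) βcl := by
  by_cases hall : ∀ y, F y ≠ 0
  · apply le_max_of_le_right
    have hF' : ∀ y, F y = 1 ∨ F y = -1 := fun y => (hF y).resolve_left (hall y)
    refine le_trans ?_ (hcl (fun x => if E x = 0 then (if 0 ≤ ∑ y, c x y * F y then 1 else -1)
      else E x) F ?_ hF')
    · apply Finset.sum_le_sum
      intro x _
      by_cases hx : E x = 0
      · have h1 : ∑ y, (1 - |E x - c x y * F y|) = 0 := by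
          apply Finset.sum_eq_zero
          intro y _
          rcases hc x y with h | h <;> rcases hF' y with h' | h' <;> simp [hx, h, h']
        rw [h1]
        simp only [hx, if_true]
        have h2 : ∀ k : ℝ, ∑ y, c x y * k * F y = k * ∑ y, c x y * F y := by
          intro k
          rw [Finset.mul_sum]
          exact Finset.sum_congr rfl (fun y _ => by ring)
        rw [h2]
        split_ifs with h3 <;> linarith
      · simp only [hx, if_false]
        apply Finset.sum_le_sum
        intro y _
        rcases (hE x).resolve_left hx with h0 | h0 <;>
          rcases hc x y with h | h <;> rcases hF' y with h' | h' <;> rw [h0, h, h'] <;> norm_num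
    · intro x
      split_ifs with h1 h2
      · exact Or.inl rfl
      · exact Or.inr rfl
      · exact (hE x).resolve_left h1
  · push Not at hall
    obtain ⟨y₁, hy₁⟩ := hall
    apply le_max_of_le_left
    have : ∀ x, ∑ y, (1 - |E x - c x y * F y|) ≤ (m : ℝ) - 1 := by
      intro x
      by_cases hx : E x = 0
      · refine row_bound _ (fun y => by linarith [abs_nonneg (E x - c x y * F y)]) 0 ?_
        rcases hc x 0 with h | h <;> rcases (hF 0).resolve_left hF0 with h' | h' <;>
          simp [hx, h, h']
      · refine row_bound _ (fun y => by linarith [abs_nonneg (E x - c x y * F y)]) y₁ ?_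
        rcases (hE x).resolve_left hx with h' | h' <;> simp [hy₁, h']
    calc _ ≤ ∑ x : Fin n, ((m : ℝ) - 1) := Finset.sum_le_sum (fun x _ => this x)
      _ = _ := by simp; ring

lemma cont_bound {n m : ℕ} [NeZero m]
    (c : Fin n → Fin m → ℝ) (hc : ∀ x y, c x y = 1 ∨ c x y = -1)
    (βcl : ℝ)
    (hcl : ∀ (a : Fin n → ℝ) (b : Fin m → ℝ),
        (∀ x, a x = 1 ∨ a x = -1) → (∀ y, b y = 1 ∨ b y = -1) →
        ∑ x, ∑ y, c x y * a x * b y ≤ βcl)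
    (E : Fin n → ℝ) (F : Fin m → ℝ)
    (hE : ∀ x, |E x| ≤ 1) (hF : ∀ y, |F y| ≤ 1)
    (hF0 : F 0 = 1 ∨ F 0 = -1) :
    ∑ x, ∑ y, (1 - |E x - c x y * F y|) ≤ max ((n : ℝ) * ((m : ℝ) - 1)) βcl := by
  have hcF : ∀ x y, |c x y * F y| ≤ 1 := by
    intro x y
    rcases hc x y with h | h <;> simpa [h] using hF y
  have hint : ∀ x y, IntervalIntegrable (fun t => 1 - |thrL (E x) t - thrL (c x y * F y) t|)
      MeasureTheory.volume 0 1 := fun x y =>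
    (intervalIntegrable_const).sub (absthr_int _ _)
  have hint2 : ∀ x, IntervalIntegrable (fun t => ∑ y, (1 - |thrL (E x) t - thrL (c x y * F y) t|))
      MeasureTheory.volume 0 1 := by
    intro x
    have := IntervalIntegrable.sum Finset.univ (fun y _ => hint x y)
    simpa only [Finset.sum_fn] using this
  have hint3 : IntervalIntegrable
      (fun t => ∑ x, ∑ y, (1 - |thrL (E x) t - thrL (c x y * F y) t|))
      MeasureTheory.volume 0 1 := by
    have := IntervalIntegrable.sum Finset.univ (fun x _ => hint2 x)
    simpa only [Finset.sum_fn] using this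
  have heq : ∫ t in (0:ℝ)..1, ∑ x, ∑ y, (1 - |thrL (E x) t - thrL (c x y * F y) t|) =
      ∑ x, ∑ y, (1 - |E x - c x y * F y|) := by
    rw [intervalIntegral.integral_finsetSum (fun x _ => hint2 x)]
    refine Finset.sum_congr rfl (fun x _ => ?_)
    rw [intervalIntegral.integral_finsetSum (fun y _ => hint x y)]
    refine Finset.sum_congr rfl (fun y _ => ?_)
    rw [intervalIntegral.integral_sub intervalIntegrable_const (absthr_int _ _),
      absthr_integral _ _ (hE x) (hcF x y)]
    simp
  rw [← heq]
  have hconst : ∫ t in (0:ℝ)..1, max ((n : ℝ) * ((m : ℝ) - 1)) βcl =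
      max ((n : ℝ) * ((m : ℝ) - 1)) βcl := by simp
  rw [← hconst]
  apply intervalIntegral.integral_mono_on_of_le_Ioo (by norm_num) hint3 intervalIntegrable_const
  intro t ht
  have hthr : ∀ x y, thrL (c x y * F y) t = c x y * thrL (F y) t := by
    intro x y
    rcases hc x y with h | h <;> simp [h, thrL_neg]
  simp only [hthr]
  refine finite_bound c hc βcl hcl (fun x => thrL (E x) t) (fun y => thrL (F y) t)
    (fun x => thrL_vals _ _ ht.1.le) (fun y => thrL_vals _ _ ht.1.le) ?_
  obtain ⟨h1, h2⟩ := ht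
  have h3 : ¬ t < -1 := by linarith
  rcases hF0 with h | h <;> simp [h, thrL, indL, h2, h3]

/-- For a total-function XOR game (all coefficients `c_{x,y} = ±1`), the maximal no-signaling
value with Bob's observable `B₁` deterministic satisfies `β₁^max ≤ max{n(m−1), β_cl^max}`;
consequently, since `β^max = nm`, the relevance of `B₁` satisfies
`w = nm − β₁^max ≥ min(n, nm − β_cl^max)`. -/
theorem xor_game_relevance {n m : ℕ} [NeZero n] [NeZero m]
    (c : Fin n → Fin m → ℝ) (hc : ∀ x y, c x y = 1 ∨ c x y = -1)
    (βcl : ℝ)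
    (hcl : IsGreatest {v : ℝ | ∃ (a : Fin n → ℝ) (b : Fin m → ℝ),
        (∀ x, a x = 1 ∨ a x = -1) ∧ (∀ y, b y = 1 ∨ b y = -1) ∧
        v = ∑ x, ∑ y, c x y * a x * b y} βcl)
    (β1max : ℝ)
    (h1max : IsGreatest {v : ℝ | ∃ p : Bool → Bool → Fin n → Fin m → ℝ,
        IsNSBox p ∧ DetB1 p ∧ v = ∑ x, ∑ y, c x y * corr p x y} β1max) :
    β1max ≤ max ((n : ℝ) * ((m : ℝ) - 1)) βcl ∧
      (n : ℝ) * (m : ℝ) - β1max ≥ min (n : ℝ) ((n : ℝ) * (m : ℝ) - βcl) := by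
  have key : β1max ≤ max ((n : ℝ) * ((m : ℝ) - 1)) βcl := by
    obtain ⟨p, ⟨hpos, hsum, hA, hB⟩, ⟨b0, hdet⟩, rfl⟩ := h1max.1
    refine le_trans ?_ (cont_bound c hc βcl (fun a b ha hb => hcl.2 ⟨a, b, ha, hb, rfl⟩)
      (fun x => ∑ a, sgn a * ∑ b, p a b x 0) (fun y => ∑ b, sgn b * ∑ a, p a b 0 y) ?_ ?_ ?_)
    · refine Finset.sum_le_sum (fun x _ => Finset.sum_le_sum (fun y _ => ?_))
      have e1 : ∑ a, sgn a * ∑ b, p a b x 0 = ∑ a, sgn a * ∑ b, p a b x y :=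
        Finset.sum_congr rfl (fun a _ => by rw [hA a x 0 y])
      have e2 : ∑ b, sgn b * ∑ a, p a b 0 y = ∑ b, sgn b * ∑ a, p a b x y :=
        Finset.sum_congr rfl (fun b _ => by rw [hB b y 0 x])
      rw [e1, e2]
      have hs := hsum x y
      have h1 := hpos true true x y
      have h2 := hpos true false x y
      have h3 := hpos false true x y
      have h4 := hpos false false x y
      simp [corr, sgn] at hs ⊢
      rw [le_sub_comm, abs_le]
      rcases hc x y with h | h <;> rw [h] <;> constructor <;> linarith
    · intro x
      have hs := hsum x 0
      have h1 := hpos true true x 0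
      have h2 := hpos true false x 0
      have h3 := hpos false true x 0
      have h4 := hpos false false x 0
      simp [sgn] at hs ⊢
      rw [abs_le]
      constructor <;> linarith
    · intro y
      have hs := hsum 0 y
      have h1 := hpos true true 0 y
      have h2 := hpos true false 0 y
      have h3 := hpos false true 0 y
      have h4 := hpos false false 0 y
      simp [sgn] at hs ⊢
      rw [abs_le]
      constructor <;> linarith
    · simp only [hdet]
      cases b0 <;> simp [sgn]
  refine ⟨key, ?_⟩
  rcases le_max_iff.1 key with h | h
  · exact (min_le_left _ _).trans (by linarith)
  · exact (min_le_right _ _).trans (by linarith)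
end
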